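/- Let δ > 0 and μ = 1/δ. Let I ⊆ (0,∞) be an open interval and suppose H, U : I → ℝ are differentiable, Δ(H(y),U(y)) ≠ 0 for all y ∈ I, and the self-similar ODE system y·H'(y) = F(H(y),U(y))/Δ(H(y),U(y)), y·U'(y) = G(H(y),U(y))/Δ(H(y),U(y)) holds on I. Define, on the open set O = {(t,x) : t < 0, x > 0, x/(−t)^δ ∈ I}, the functions u(t,x) = −δ·(−t)^(δ−1)·y·U(y) and h(t,x) = δ²·(−t)^(2(δ−1))·y²·H(y)/(γ−1), where y = x/(−t)^δ. Then (h,u) satisfies the Euler system h_t + u·h_x + (γ−1)·h·u_x = 0 and u_t + u·u_x + h_x = 0 at every point of O. -/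

import Mathlib

open Set

noncomputable def k₁ (γ μ : ℝ) : ℝ := ((γ + 1) + μ * (3 - γ)) / 2
noncomputable def k₂ (γ μ : ℝ) : ℝ := 2 * (1 - μ) / (γ - 1)
noncomputable def F (γ μ H U : ℝ) : ℝ := 2 * H * (H - (U ^ 2 - k₁ γ μ * U + μ))
noncomputable def G (γ μ H U : ℝ) : ℝ := H * (U + k₂ γ μ) - U * (U - 1) * (U - μ)
noncomputable def Dlt (H U : ℝ) : ℝ := (U - 1) ^ 2 - H
/-- Self-similar ansatz for the velocity: `u(t,x) = -δ(-t)^(δ-1) y U(y)`, `y = x/(-t)^δ`. -/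
noncomputable def uAnsatz (δ : ℝ) (U : ℝ → ℝ) (p : ℝ × ℝ) : ℝ :=
  -δ * (-p.1) ^ (δ - 1) * (p.2 / (-p.1) ^ δ) * U (p.2 / (-p.1) ^ δ)
/-- Self-similar ansatz for the enthalpy: `h(t,x) = δ²(-t)^(2(δ-1)) y² H(y)/(γ-1)`. -/
noncomputable def hAnsatz (γ δ : ℝ) (H : ℝ → ℝ) (p : ℝ × ℝ) : ℝ :=
  δ ^ 2 * (-p.1) ^ (2 * (δ - 1)) * (p.2 / (-p.1) ^ δ) ^ 2
    * H (p.2 / (-p.1) ^ δ) / (γ - 1)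

/-!
For a self-similar function `(-t)^a φ(x/(-t)^δ)`, one derivative in `t` costs a factor `(-t)⁻¹` and
one in `x` a factor `(-t)^(-δ)`. With the exponents `δ - 1` for the velocity and `2(δ - 1)` for the
enthalpy, all terms of each Euler equation therefore carry the same power of `-t`, and the system
becomes an ODE system for the profiles. Written for `H` and `U`, this is a linear system in
`(y H', y U')` with determinant `-(γ - 1) Δ`, whose solution by Cramer's rule is `(F / Δ, G / Δ)`.
-/

/-- The Euler system for the enthalpy `h` and the velocity `u`, as functions of `p = (t, x)`, at a
single point. Differentiability is included so that no `fderiv` takes its junk value `0`. -/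
structure IsEulerSolutionAt (γ : ℝ) (h u : ℝ × ℝ → ℝ) (p : ℝ × ℝ) : Prop where
  differentiableAt_enthalpy : DifferentiableAt ℝ h p
  differentiableAt_velocity : DifferentiableAt ℝ u p
  mass : fderiv ℝ h p (1, 0) + u p * fderiv ℝ h p (0, 1)
    + (γ - 1) * h p * fderiv ℝ u p (0, 1) = 0
  momentum : fderiv ℝ u p (1, 0) + u p * fderiv ℝ u p (0, 1) + fderiv ℝ h p (0, 1) = 0

/-- The similarity variable `y = x / (-t)^δ` at `p = (t, x)`, meaningful for `t < 0`. -/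
noncomputable def similarityVar (δ : ℝ) (p : ℝ × ℝ) : ℝ := p.2 / (-p.1) ^ δ

/-- The self-similar function `(-t)^a φ(y)` with profile `φ`, where `y` is the similarity variable.
Powers of `y` in an ansatz are absorbed into `φ`. -/
noncomputable def selfSimilar (δ a : ℝ) (φ : ℝ → ℝ) (p : ℝ × ℝ) : ℝ :=
  (-p.1) ^ a * φ (similarityVar δ p)

section SelfSimilar

variable {p : ℝ × ℝ} {γ δ φ' ψ' : ℝ} {φ ψ : ℝ → ℝ}

theorem eventually_fst_neg (ht : p.1 < 0) : ∀ᶠ q : ℝ × ℝ in nhds p, q.1 < 0 :=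
  continuous_fst.continuousAt.eventually_lt_const ht

theorem hasFDerivAt_neg_fst_rpow (a : ℝ) (ht : p.1 < 0) :
    HasFDerivAt (fun q : ℝ × ℝ => (-q.1) ^ a)
      (-(a * (-p.1) ^ (a - 1)) • ContinuousLinearMap.fst ℝ ℝ ℝ) p := by
  have h := (hasFDerivAt_fst (𝕜 := ℝ) (p := p)).neg.rpow_const (p := a) (.inl (neg_pos.2 ht).ne')
  refine h.congr_fderiv ?_
  simp only [Pi.neg_apply]
  module

theorem similarityVar_eq_mul_rpow_neg (δ : ℝ) (ht : p.1 < 0) :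
    similarityVar δ p = p.2 * (-p.1) ^ (-δ) := by
  rw [similarityVar, Real.rpow_neg (neg_pos.2 ht).le, div_eq_mul_inv]

theorem hasFDerivAt_similarityVar (δ : ℝ) (ht : p.1 < 0) :
    HasFDerivAt (similarityVar δ)
      ((δ * similarityVar δ p / -p.1) • ContinuousLinearMap.fst ℝ ℝ ℝ
        + (-p.1) ^ (-δ) • ContinuousLinearMap.snd ℝ ℝ ℝ) p := by
  have h := (hasFDerivAt_snd (𝕜 := ℝ) (p := p)).mul (hasFDerivAt_neg_fst_rpow (-δ) ht)
  refine (h.congr_of_eventuallyEq ((eventually_fst_neg ht).mono fun q hq =>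
    similarityVar_eq_mul_rpow_neg δ hq)).congr_fderiv ?_
  rw [similarityVar_eq_mul_rpow_neg δ ht, Real.rpow_sub_one (neg_pos.2 ht).ne']
  module

theorem hasFDerivAt_selfSimilar (a : ℝ) (ht : p.1 < 0)
    (hφ : HasDerivAt φ φ' (similarityVar δ p)) :
    HasFDerivAt (selfSimilar δ a φ)
      (((-p.1) ^ (a - 1) * (δ * similarityVar δ p * φ' - a * φ (similarityVar δ p))) •
          ContinuousLinearMap.fst ℝ ℝ ℝ
        + ((-p.1) ^ (a - δ) * φ') • ContinuousLinearMap.snd ℝ ℝ ℝ) p := by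
  have hs : 0 < -p.1 := neg_pos.2 ht
  have h := (hasFDerivAt_neg_fst_rpow a ht).mul
    (hφ.comp_hasFDerivAt p (hasFDerivAt_similarityVar δ ht))
  refine h.congr_fderiv ?_
  rw [sub_eq_add_neg a δ, Real.rpow_add hs, Real.rpow_sub_one hs.ne']
  simp only [Function.comp_apply]
  module

theorem fderiv_selfSimilar_time (a : ℝ) (ht : p.1 < 0)
    (hφ : HasDerivAt φ φ' (similarityVar δ p)) :
    fderiv ℝ (selfSimilar δ a φ) p (1, 0) =
      (-p.1) ^ (a - 1) * (δ * similarityVar δ p * φ' - a * φ (similarityVar δ p)) := by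
  simp [(hasFDerivAt_selfSimilar a ht hφ).fderiv]

theorem fderiv_selfSimilar_space (a : ℝ) (ht : p.1 < 0)
    (hφ : HasDerivAt φ φ' (similarityVar δ p)) :
    fderiv ℝ (selfSimilar δ a φ) p (0, 1) = (-p.1) ^ (a - δ) * φ' := by
  simp [(hasFDerivAt_selfSimilar a ht hφ).fderiv]

theorem selfSimilar_mul_fderiv_space (a b : ℝ) (ht : p.1 < 0)
    (hφ : HasDerivAt φ φ' (similarityVar δ p)) :
    selfSimilar δ a ψ p * fderiv ℝ (selfSimilar δ b φ) p (0, 1) =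
      (-p.1) ^ (a + b - δ) * (ψ (similarityVar δ p) * φ') := by
  rw [fderiv_selfSimilar_space b ht hφ, selfSimilar, add_sub_assoc, Real.rpow_add (neg_pos.2 ht)]
  ring

theorem mass_selfSimilar_eq (ht : p.1 < 0) (hφ : HasDerivAt φ φ' (similarityVar δ p))
    (hψ : HasDerivAt ψ ψ' (similarityVar δ p)) :
    fderiv ℝ (selfSimilar δ (2 * (δ - 1)) φ) p (1, 0)
        + selfSimilar δ (δ - 1) ψ p * fderiv ℝ (selfSimilar δ (2 * (δ - 1)) φ) p (0, 1)
        + (γ - 1) * selfSimilar δ (2 * (δ - 1)) φ p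
          * fderiv ℝ (selfSimilar δ (δ - 1) ψ) p (0, 1) =
      (-p.1) ^ (2 * (δ - 1) - 1) *
        (δ * similarityVar δ p * φ' - 2 * (δ - 1) * φ (similarityVar δ p)
          + ψ (similarityVar δ p) * φ' + (γ - 1) * φ (similarityVar δ p) * ψ') := by
  have transport_exponent : δ - 1 + 2 * (δ - 1) - δ = 2 * (δ - 1) - 1 := by ring
  have compression_exponent : 2 * (δ - 1) + (δ - 1) - δ = 2 * (δ - 1) - 1 := by ring
  rw [mul_assoc (γ - 1), selfSimilar_mul_fderiv_space _ _ ht hφ,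
    selfSimilar_mul_fderiv_space _ _ ht hψ, fderiv_selfSimilar_time _ ht hφ,
    transport_exponent, compression_exponent]
  ring

theorem momentum_selfSimilar_eq (ht : p.1 < 0) (hφ : HasDerivAt φ φ' (similarityVar δ p))
    (hψ : HasDerivAt ψ ψ' (similarityVar δ p)) :
    fderiv ℝ (selfSimilar δ (δ - 1) ψ) p (1, 0)
        + selfSimilar δ (δ - 1) ψ p * fderiv ℝ (selfSimilar δ (δ - 1) ψ) p (0, 1)
        + fderiv ℝ (selfSimilar δ (2 * (δ - 1)) φ) p (0, 1) =
      (-p.1) ^ (δ - 1 - 1) *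
        (δ * similarityVar δ p * ψ' - (δ - 1) * ψ (similarityVar δ p)
          + ψ (similarityVar δ p) * ψ' + φ') := by
  have transport_exponent : δ - 1 + (δ - 1) - δ = δ - 1 - 1 := by ring
  have pressure_exponent : 2 * (δ - 1) - δ = δ - 1 - 1 := by ring
  rw [selfSimilar_mul_fderiv_space _ _ ht hψ, fderiv_selfSimilar_time _ ht hψ,
    fderiv_selfSimilar_space _ ht hφ, transport_exponent, pressure_exponent]
  ring

theorem isEulerSolutionAt_selfSimilar_iff (ht : p.1 < 0)
    (hφ : HasDerivAt φ φ' (similarityVar δ p)) (hψ : HasDerivAt ψ ψ' (similarityVar δ p)) :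
    IsEulerSolutionAt γ (selfSimilar δ (2 * (δ - 1)) φ) (selfSimilar δ (δ - 1) ψ) p ↔
      δ * similarityVar δ p * φ' - 2 * (δ - 1) * φ (similarityVar δ p)
        + ψ (similarityVar δ p) * φ' + (γ - 1) * φ (similarityVar δ p) * ψ' = 0 ∧
      δ * similarityVar δ p * ψ' - (δ - 1) * ψ (similarityVar δ p)
        + ψ (similarityVar δ p) * ψ' + φ' = 0 := by
  have rpow_ne (a : ℝ) : (-p.1) ^ a ≠ 0 := (Real.rpow_pos_of_pos (neg_pos.2 ht) a).ne'
  constructor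
  · rintro ⟨-, -, mass, momentum⟩
    rw [mass_selfSimilar_eq ht hφ hψ] at mass
    rw [momentum_selfSimilar_eq ht hφ hψ] at momentum
    exact ⟨(mul_eq_zero.1 mass).resolve_left (rpow_ne _),
      (mul_eq_zero.1 momentum).resolve_left (rpow_ne _)⟩
  · rintro ⟨mass, momentum⟩
    exact ⟨(hasFDerivAt_selfSimilar _ ht hφ).differentiableAt,
      (hasFDerivAt_selfSimilar _ ht hψ).differentiableAt,
      by rw [mass_selfSimilar_eq ht hφ hψ, mass, mul_zero],
      by rw [momentum_selfSimilar_eq ht hφ hψ, momentum, mul_zero]⟩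

end SelfSimilar

theorem uAnsatz_eq_selfSimilar (δ : ℝ) (U : ℝ → ℝ) :
    uAnsatz δ U = selfSimilar δ (δ - 1) (fun y => -δ * (y * U y)) := by
  funext p
  simp only [uAnsatz, selfSimilar, similarityVar]
  ring

theorem hAnsatz_eq_selfSimilar (γ δ : ℝ) (H : ℝ → ℝ) :
    hAnsatz γ δ H = selfSimilar δ (2 * (δ - 1)) (fun y => δ ^ 2 / (γ - 1) * (y ^ 2 * H y)) := by
  funext p
  simp only [hAnsatz, selfSimilar, similarityVar]
  ring

theorem hasDerivAt_enthalpyProfile {H : ℝ → ℝ} {H' y : ℝ} (c : ℝ) (hH : HasDerivAt H H' y) :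
    HasDerivAt (fun z => c * (z ^ 2 * H z)) (c * (2 * y * H y + y ^ 2 * H')) y := by
  simpa using ((hasDerivAt_pow 2 y).mul hH).const_mul c

theorem hasDerivAt_velocityProfile {U : ℝ → ℝ} {U' y : ℝ} (c : ℝ) (hU : HasDerivAt U U' y) :
    HasDerivAt (fun z => c * (z * U z)) (c * (U y + y * U')) y := by
  simpa using ((hasDerivAt_id y).mul hU).const_mul c

section LinearSystem

variable {γ H U : ℝ}

theorem sub_one_mul_k₂ (hγ : γ ≠ 1) (μ : ℝ) : (γ - 1) * k₂ γ μ = 2 * (1 - μ) :=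
  mul_div_cancel₀ _ (sub_ne_zero.2 hγ)

theorem reduced_mass_F_G (hγ : γ ≠ 1) (μ : ℝ) (hΔ : Dlt H U ≠ 0) :
    (1 - U) * (F γ μ H U / Dlt H U) - (γ - 1) * H * (G γ μ H U / Dlt H U) =
      H * ((γ + 1) * U - 2 * μ) := by
  rw [← mul_div_assoc, ← mul_div_assoc, ← sub_div, div_eq_iff hΔ]
  simp only [F, G, Dlt, k₁]
  linear_combination (-H ^ 2) * sub_one_mul_k₂ hγ μ

theorem reduced_momentum_F_G (hγ : γ ≠ 1) (μ : ℝ) (hΔ : Dlt H U ≠ 0) :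
    F γ μ H U / Dlt H U - (γ - 1) * (1 - U) * (G γ μ H U / Dlt H U) =
      (γ - 1) * U * (μ - U) - 2 * H := by
  rw [← mul_div_assoc, ← sub_div, div_eq_iff hΔ]
  simp only [F, G, Dlt, k₁]
  linear_combination (-(1 - U) * H) * sub_one_mul_k₂ hγ μ

end LinearSystem

theorem stmt18_general {γ δ μ y H' U' : ℝ} {H U : ℝ → ℝ} {p : ℝ × ℝ} (hγ : γ ≠ 1)
    (hδμ : δ * μ = 1) (ht : p.1 < 0) (hy : similarityVar δ p = y)
    (hH : HasDerivAt H H' y) (hU : HasDerivAt U U' y) (hΔ : Dlt (H y) (U y) ≠ 0)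
    (hODE1 : y * H' = F γ μ (H y) (U y) / Dlt (H y) (U y))
    (hODE2 : y * U' = G γ μ (H y) (U y) / Dlt (H y) (U y)) :
    IsEulerSolutionAt γ (hAnsatz γ δ H) (uAnsatz δ U) p := by
  subst y
  have hφ := hasDerivAt_enthalpyProfile (δ ^ 2 / (γ - 1)) hH
  have hψ := hasDerivAt_velocityProfile (-δ) hU
  rw [hAnsatz_eq_selfSimilar, uAnsatz_eq_selfSimilar, isEulerSolutionAt_selfSimilar_iff ht hφ hψ]
  have mass := reduced_mass_F_G hγ μ hΔ
  have momentum := reduced_momentum_F_G hγ μ hΔ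
  rw [← hODE1, ← hODE2] at mass momentum
  have hc : δ ^ 2 / (γ - 1) * (γ - 1) = δ ^ 2 := div_mul_cancel₀ _ (sub_ne_zero.2 hγ)
  generalize δ ^ 2 / (γ - 1) = c, similarityVar δ p = y at *
  constructor
  · linear_combination (c * δ * y ^ 2) * mass - (2 * c * y ^ 2 * H y) * hδμ
  · linear_combination (c * y) * momentum + (δ * y * U y) * hδμ
      + (y * ((1 - U y) * (y * U') + U y * (μ - U y))) * hc

/-- if `(H,U)` solve the self-similar ODE system on an open interval
`I ⊆ (0,∞)` with `Δ ≠ 0`, then the self-similar ansatz (for `t < 0`, `x > 0`,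
`x/(-t)^δ ∈ I`) solves the Euler system in enthalpy form. -/
theorem stmt18 (γ δ μ : ℝ) (hγ1 : 1 < γ) (hγ3 : γ < 3) (hδ : 0 < δ) (hμδ : μ = 1 / δ)
    (I : Set ℝ) (a b : ℝ) (hIab : I = Ioo a b) (hIsub : I ⊆ Ioi (0 : ℝ))
    (H U : ℝ → ℝ)
    (hdH : ∀ y ∈ I, DifferentiableAt ℝ H y)
    (hdU : ∀ y ∈ I, DifferentiableAt ℝ U y)
    (hΔ : ∀ y ∈ I, Dlt (H y) (U y) ≠ 0)
    (hODE1 : ∀ y ∈ I, y * deriv H y = F γ μ (H y) (U y) / Dlt (H y) (U y))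
    (hODE2 : ∀ y ∈ I, y * deriv U y = G γ μ (H y) (U y) / Dlt (H y) (U y)) :
    ∀ p : ℝ × ℝ, p.1 < 0 → 0 < p.2 → p.2 / (-p.1) ^ δ ∈ I →
      (fderiv ℝ (hAnsatz γ δ H) p (1, 0)
        + uAnsatz δ U p * fderiv ℝ (hAnsatz γ δ H) p (0, 1)
        + (γ - 1) * hAnsatz γ δ H p * fderiv ℝ (uAnsatz δ U) p (0, 1) = 0) ∧
      (fderiv ℝ (uAnsatz δ U) p (1, 0)
        + uAnsatz δ U p * fderiv ℝ (uAnsatz δ U) p (0, 1)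
        + fderiv ℝ (hAnsatz γ δ H) p (0, 1) = 0) := by
  intro p ht _ hy
  have hδμ : δ * μ = 1 := by rw [hμδ, mul_one_div_cancel hδ.ne']
  have euler : IsEulerSolutionAt γ (hAnsatz γ δ H) (uAnsatz δ U) p :=
    stmt18_general hγ1.ne' hδμ ht rfl (hdH _ hy).hasDerivAt (hdU _ hy).hasDerivAt (hΔ _ hy)
      (hODE1 _ hy) (hODE2 _ hy)
  exact ⟨euler.mass, euler.momentum⟩
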